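/- arXiv:2502.10348 — 2 statements merged into one kernel-verified Lean document; each statement's English description precedes it below -/
import Mathlib

section
/- Let G = (V, E) be a weighted digraph, let s ∈ V, let ξ ≥ 0 be a real number, let r be a natural number, and let d : V → ℝ satisfy d(s) = 0. Assume: (i) for every edge e = su ∈ E whose tail is s, d(u) ≤ (1+ξ)·(d(s) + w(e)); and (ii) every vertex of V is r-certified with respect to d. Then for every t ∈ V and every path P = s → t in G on which s occurs only as the first vertex, d(t) ≤ (1+ξ)^{r+1} · w(P). -/
/-!
Split the path `P = s → t` as its first edge `(s, u)` followed by `Q = u → t`, which avoids `s`.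
Certification of `u` bounds `d t` by `(1 + ξ) ^ r * (d u + w(Q))`, and replacing `d u` by its upper
bound `(1 + ξ) * (d s + w (s, u))` costs the extra factor `1 + ξ`, because
`w(Q) ≤ (1 + ξ) * w(Q)`.
-/

/-- `IsWalk E u l v` : the list of vertices `l` is a path (walk) from `u` to `v`
in the digraph with edge set `E`; consecutive vertices must form edges.
A single-vertex list `[u]` is the empty path from `u` to `u`. -/
def IsWalk {V : Type*} (E : Set (V × V)) (u : V) (l : List V) (v : V) : Prop :=
  l ≠ [] ∧ l.head? = some u ∧ l.getLast? = some v ∧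
    l.Chain' (fun a b => (a, b) ∈ E)

/-- The weight of a walk given by its vertex list: the sum of the weights of the
consecutive pairs. -/
def walkWeight {V : Type*} (w : V × V → ℝ) (l : List V) : ℝ :=
  ((l.zip l.tail).map w).sum

/-- `u` is `k`-certified with respect to the estimates `d`: for every path
`P = u → v` avoiding the source `s`, `d v ≤ (1+ξ)^k * (d u + w(P))`. -/
def Certified {V : Type*} (E : Set (V × V)) (w : V × V → ℝ) (s : V)
    (d : V → ℝ) (ξ : ℝ) (k : ℕ) (u : V) : Prop :=
  ∀ (v : V) (l : List V), IsWalk E u l v → (∀ x ∈ l, x ≠ s) →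
    d v ≤ (1 + ξ) ^ k * (d u + walkWeight w l)

section Walks

variable {V : Type*} {E : Set (V × V)} {u v a b : V} {l : List V}

theorem isWalk_iff :
    IsWalk E u l v ↔
      l.head? = some u ∧ l.getLast? = some v ∧ l.IsChain (fun a b => (a, b) ∈ E) :=
  ⟨And.right, fun h => ⟨List.ne_nil_of_mem (List.mem_of_head? h.1), h⟩⟩

theorem isWalk_singleton : IsWalk E u [a] v ↔ a = u ∧ a = v := by
  simp [isWalk_iff]

theorem isWalk_cons_cons :
    IsWalk E u (a :: b :: l) v ↔ a = u ∧ (a, b) ∈ E ∧ IsWalk E b (b :: l) v := by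
  simp only [isWalk_iff, List.head?_cons, Option.some.injEq, List.getLast?_cons_cons,
    List.isChain_cons_cons, true_and, and_left_comm]

theorem walkWeight_singleton (w : V × V → ℝ) (a : V) : walkWeight w [a] = 0 := by
  simp [walkWeight]

theorem walkWeight_cons_cons (w : V × V → ℝ) (a b : V) (l : List V) :
    walkWeight w (a :: b :: l) = w (a, b) + walkWeight w (b :: l) := by
  simp [walkWeight]

theorem IsWalk.walkWeight_nonneg {w : V × V → ℝ} (hw : ∀ e ∈ E, 0 ≤ w e)
    (hl : IsWalk E u l v) : 0 ≤ walkWeight w l := by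
  induction l generalizing u with
  | nil => exact absurd rfl hl.1
  | cons a l ih =>
    cases l with
    | nil => exact (walkWeight_singleton w a).ge
    | cons b q =>
      obtain ⟨-, hab, hq⟩ := isWalk_cons_cons.mp hl
      rw [walkWeight_cons_cons]
      exact add_nonneg (hw _ hab) (ih hq)

end Walks

section Estimates

variable {V : Type*} {E : Set (V × V)} {w : V × V → ℝ} {s : V} {d : V → ℝ} {ξ : ℝ}

theorem Certified.le_pow_succ_mul {k : ℕ} {u v : V} {l : List V} {c : ℝ}
    (hu : Certified E w s d ξ k u) (hξ : 0 ≤ ξ) (hc : d u ≤ (1 + ξ) * c)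
    (hl : IsWalk E u l v) (hs : ∀ x ∈ l, x ≠ s) (hl₀ : 0 ≤ walkWeight w l) :
    d v ≤ (1 + ξ) ^ (k + 1) * (c + walkWeight w l) := by
  have hweight : walkWeight w l ≤ (1 + ξ) * walkWeight w l :=
    le_mul_of_one_le_left hl₀ (le_add_of_nonneg_right hξ)
  calc
    d v ≤ (1 + ξ) ^ k * (d u + walkWeight w l) := hu v l hl hs
    _ ≤ (1 + ξ) ^ k * ((1 + ξ) * c + (1 + ξ) * walkWeight w l) := by gcongr
    _ = (1 + ξ) ^ (k + 1) * (c + walkWeight w l) := by ring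

theorem estimate_accuracy_from_ranks_general {r : ℕ} {t : V} {l : List V}
    (hw : ∀ e ∈ E, 0 ≤ w e) (hξ : 0 ≤ ξ) (hds : 0 ≤ d s)
    (hsrc : ∀ u, (s, u) ∈ E → d u ≤ (1 + ξ) * (d s + w (s, u)))
    (hcert : ∀ u, (s, u) ∈ E → Certified E w s d ξ r u)
    (hl : IsWalk E s l t) (hs : ∀ x ∈ l.tail, x ≠ s) :
    d t ≤ (1 + ξ) ^ (r + 1) * (d s + walkWeight w l) := by
  match l with
  | [] => exact absurd rfl hl.1
  | [a] =>
    obtain ⟨rfl, rfl⟩ := isWalk_singleton.mp hl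
    rw [walkWeight_singleton, add_zero]
    exact le_mul_of_one_le_left hds (one_le_pow₀ (le_add_of_nonneg_right hξ))
  | a :: u :: q =>
    obtain ⟨rfl, hau, hq⟩ := isWalk_cons_cons.mp hl
    rw [walkWeight_cons_cons, ← add_assoc]
    exact (hcert u hau).le_pow_succ_mul hξ (hsrc u hau) hq hs (hq.walkWeight_nonneg hw)

end Estimates

theorem estimate_accuracy_from_ranks {V : Type*} [Fintype V]
    (E : Set (V × V)) (w : V × V → ℝ) (hw : ∀ e ∈ E, 0 ≤ w e)
    (s : V) (ξ : ℝ) (hξ : 0 ≤ ξ) (r : ℕ) (d : V → ℝ) (hds : d s = 0)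
    (hsrc : ∀ e ∈ E, e.1 = s → d e.2 ≤ (1 + ξ) * (d s + w e))
    (hcert : ∀ v : V, Certified E w s d ξ r v) :
    ∀ (t : V) (l : List V), IsWalk E s l t → (∀ x ∈ l.tail, x ≠ s) →
      d t ≤ (1 + ξ) ^ (r + 1) * walkWeight w l := by
  intro t l hl hs
  simpa only [hds, zero_add] using estimate_accuracy_from_ranks_general hw hξ hds.ge
    (fun u hu => hsrc (s, u) hu rfl) (fun u _ => hcert u) hl hs
end

section
/- Let ξ > 0, a > 0, and c ≥ 0 be real numbers, let k be a natural number, and let x_0, x_1, …, x_k be real numbers satisfying a ≤ x_i ≤ (1+ξ)^{2c} · a for all 0 ≤ i ≤ k, and x_{i+1} > (1+ξ) · x_{i−1} for all 1 ≤ i ≤ k−1. Then k < 4c + 2. -/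
/-! Sampled at the multiples of `p`, the sequence grows by a factor of at least `r` per step, so
staying below `r ^ s` times its initial value allows at most `s` steps: `⌊k / p⌋ ≤ s`. Hence
`k < p * (⌊k / p⌋ + 1) ≤ p * (s + 1)`. A critical path has `p = 2`, `r = 1 + ξ` and `s = 2 * c`. -/

theorem natCast_le_of_mul_le_succ_of_le_rpow_mul {r s : ℝ} {u : ℕ → ℝ} {n : ℕ} (hr : 1 < r)
    (hu : 0 < u 0) (hgrow : ∀ j < n, r * u j ≤ u (j + 1)) (hle : u n ≤ r ^ s * u 0) :
    (n : ℝ) ≤ s := by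
  have hmul : r ^ n * u 0 ≤ r ^ s * u 0 := (geom_le (zero_le_one.trans hr.le) n hgrow).trans hle
  have hpow : r ^ (n : ℝ) ≤ r ^ s := by
    simpa only [Real.rpow_natCast] using le_of_mul_le_mul_right hmul hu
  exact (Real.rpow_le_rpow_left_iff hr).mp hpow

theorem interval_crossing_bound_general {r s : ℝ} {x : ℕ → ℝ} {p k : ℕ} (hr : 1 < r) (hp : 0 < p)
    (hx : 0 < x 0) (hgrow : ∀ i, i + p ≤ k → r * x i ≤ x (i + p))
    (hle : ∀ i ≤ k, x i ≤ r ^ s * x 0) :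
    (k : ℝ) < p * (s + 1) := by
  have hsample : ∀ j < k / p, r * x (p * j) ≤ x (p * (j + 1)) := fun j hj ↦
    hgrow (p * j) ((Nat.mul_le_mul_left p hj).trans (Nat.mul_div_le k p))
  have hdiv : ((k / p : ℕ) : ℝ) ≤ s :=
    natCast_le_of_mul_le_succ_of_le_rpow_mul (u := fun j ↦ x (p * j)) hr hx hsample
      (hle _ (Nat.mul_div_le k p))
  calc (k : ℝ) < p * ((k / p : ℕ) + 1) := mod_cast Nat.lt_mul_div_succ k hp
    _ ≤ p * (s + 1) := by gcongr

theorem interval_crossing_bound (ξ a c : ℝ) (hξ : 0 < ξ) (ha : 0 < a)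
    (hc : 0 ≤ c) (k : ℕ) (x : ℕ → ℝ)
    (hbound : ∀ i ≤ k, a ≤ x i ∧ x i ≤ (1 + ξ) ^ (2 * c) * a)
    (hgrow : ∀ i, 1 ≤ i → i ≤ k - 1 → (1 + ξ) * x (i - 1) < x (i + 1)) :
    (k : ℝ) < 4 * c + 2 := by
  have hstart : a ≤ x 0 := (hbound 0 k.zero_le).1
  have hle : ∀ i ≤ k, x i ≤ (1 + ξ) ^ (2 * c) * x 0 := fun i hi ↦
    (hbound i hi).2.trans (by gcongr)
  have hstep : ∀ i, i + 2 ≤ k → (1 + ξ) * x i ≤ x (i + 2) := fun i hi ↦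
    (hgrow (i + 1) i.succ_pos (Nat.le_sub_one_of_lt hi)).le
  calc (k : ℝ) < (2 : ℕ) * (2 * c + 1) :=
        interval_crossing_bound_general (lt_add_of_pos_right 1 hξ) two_pos (ha.trans_le hstart)
          hstep hle
    _ = 4 * c + 2 := by push_cast; ring
end
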